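/- Let n, m be finite types and let Λ, Γ, Φ : Matrix n n ℂ →ₗ[ℂ] Matrix n n ℂ be linear maps with Λ = (1+s) • Γ - s • Φ for some real s ≥ 0, where Γ and Φ are completely positive and trace-preserving. Then for every finite index type J, every ensemble consisting of reals p_j ≥ 0 and density matrices σ_j ∈ Matrix (m × n) (m × n) ℂ (j ∈ J), and every POVM, i.e., family (M_j)_{j∈J} of positive semidefinite matrices in Matrix (m × n) (m × n) ℂ with Σ_j M_j = 1, the average state-discrimination success probability satisfies Σ_j p_j · Re Tr((id_m ⊗ Λ)(σ_j) · M_j) ≤ (1+s) · Σ_j p_j · Re Tr((id_m ⊗ Γ)(σ_j) · M_j). -/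

import Mathlib

open Matrix
open scoped ComplexOrder

/-- The positive semidefinite square root of a positive semidefinite matrix
(the definition from the older Mathlib, since removed there). -/
noncomputable def Matrix.PosSemidef.sqrt {n 𝕜 : Type*} [Fintype n] [RCLike 𝕜] [DecidableEq n]
    {A : Matrix n n 𝕜} (hA : A.PosSemidef) : Matrix n n 𝕜 :=
  hA.1.eigenvectorUnitary.1 * diagonal ((↑) ∘ Real.sqrt ∘ hA.1.eigenvalues) *
  (star hA.1.eigenvectorUnitary : Matrix n n 𝕜)

/-- The trace norm of a matrix: the trace of the positive semidefinite square root of `AᴴA`. -/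
noncomputable def traceNorm {n : Type*} [Fintype n] [DecidableEq n] (A : Matrix n n ℂ) : ℝ :=
  ((Matrix.posSemidef_conjTranspose_mul_self A).sqrt.trace).re

/-- The blockwise application `id_m ⊗ Φ` of a linear map `Φ` on `Matrix n n ℂ`:
`((id_m ⊗ Φ)(Δ))((i,k),(j,l)) = (Φ(Δ_{i,j}))(k,l)` where `Δ_{i,j}(k,l) = Δ((i,k),(j,l))`
is the `(i,j)` block of `Δ`. -/
def idTensor (m : Type*) [Fintype m] {n : Type*} [Fintype n]
    (Φ : Matrix n n ℂ →ₗ[ℂ] Matrix n n ℂ) :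
    Matrix (m × n) (m × n) ℂ →ₗ[ℂ] Matrix (m × n) (m × n) ℂ where
  toFun Δ := Matrix.of fun p q =>
    (Φ (Matrix.of fun k l => Δ (p.1, k) (q.1, l))) p.2 q.2
  map_add' Δ Δ' := by
    have h : ∀ i j : m, (Matrix.of fun k l => (Δ + Δ') (i, k) (j, l))
        = (Matrix.of fun k l => Δ (i, k) (j, l))
          + (Matrix.of fun k l => Δ' (i, k) (j, l)) := by
      intro i j; ext k l; simp [Matrix.add_apply]
    ext ⟨i, k⟩ ⟨j, l⟩
    simp only [Matrix.of_apply, Matrix.add_apply]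
    rw [← Matrix.add_apply, ← map_add, ← h]
    rfl
  map_smul' c Δ := by
    have h : ∀ i j : m, (Matrix.of fun k l => (c • Δ) (i, k) (j, l))
        = c • (Matrix.of fun k l => Δ (i, k) (j, l)) := by
      intro i j; ext k l; simp [Matrix.smul_apply]
    ext ⟨i, k⟩ ⟨j, l⟩
    simp only [Matrix.of_apply, Matrix.smul_apply, RingHom.id_apply]
    rw [← Matrix.smul_apply, ← LinearMap.map_smul, ← h]
    rfl

/-- Complete positivity: `id_m ⊗ Φ` maps positive semidefinite matrices to positive
semidefinite matrices for every finite type `m`. -/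
def IsCompletelyPositive {n : Type*} [Fintype n]
    (Φ : Matrix n n ℂ →ₗ[ℂ] Matrix n n ℂ) : Prop :=
  ∀ (m : Type) (_ : Fintype m) (Δ : Matrix (m × n) (m × n) ℂ),
    Δ.PosSemidef → (idTensor m Φ Δ).PosSemidef

/-- Trace preservation. -/
def IsTracePreserving {n : Type*} [Fintype n]
    (Φ : Matrix n n ℂ →ₗ[ℂ] Matrix n n ℂ) : Prop :=
  ∀ X : Matrix n n ℂ, (Φ X).trace = X.trace

/-- A density matrix: positive semidefinite with unit trace. -/
def IsDensityMatrix {N : Type*} [Fintype N] (ρ : Matrix N N ℂ) : Prop :=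
  ρ.PosSemidef ∧ ρ.trace = 1

open scoped MatrixOrder in
/-- The trace of a product of two positive semidefinite matrices is nonnegative. -/
theorem Matrix.PosSemidef.trace_mul_nonneg {N : Type*} [Fintype N]
    {A B : Matrix N N ℂ} (hA : A.PosSemidef) (hB : B.PosSemidef) : 0 ≤ (A * B).trace := by
  classical
  obtain ⟨C, rfl⟩ := CStarAlgebra.nonneg_iff_eq_star_mul_self.mp hB.nonneg
  rw [Matrix.star_eq_conjTranspose, ← Matrix.mul_assoc, Matrix.trace_mul_comm, ← Matrix.mul_assoc]
  exact (hA.mul_mul_conjTranspose_same C).trace_nonneg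

/-- Blockwise application commutes with reindexing the ancilla. -/
theorem idTensor_submatrix {m m' n : Type*} [Fintype m] [Fintype m'] [Fintype n]
    (Φ : Matrix n n ℂ →ₗ[ℂ] Matrix n n ℂ) (f : m' → m) (Δ : Matrix (m × n) (m × n) ℂ) :
    idTensor m' Φ (Δ.submatrix (Prod.map f id) (Prod.map f id)) =
      (idTensor m Φ Δ).submatrix (Prod.map f id) (Prod.map f id) :=
  rfl

/-- A completely positive map preserves positivity with an ancilla in any universe. -/
theorem IsCompletelyPositive.posSemidef_idTensor {m n : Type*} [Fintype m] [Fintype n]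
    {Φ : Matrix n n ℂ →ₗ[ℂ] Matrix n n ℂ} (hΦ : IsCompletelyPositive Φ)
    {Δ : Matrix (m × n) (m × n) ℂ} (hΔ : Δ.PosSemidef) : (idTensor m Φ Δ).PosSemidef := by
  let e := (Fintype.equivFin m).symm
  have h := hΦ (Fin (Fintype.card m)) inferInstance _ (hΔ.submatrix (Prod.map e id))
  rw [idTensor_submatrix] at h
  exact (Matrix.posSemidef_submatrix_equiv (e.prodCongr (Equiv.refl n))).mp h

/-- Upper-bound half of the state-discrimination interpretation of the robustness of
non-Markovianity: for `Λ = (1+s)Γ - sΦ` with `Γ, Φ` completely positive trace-preserving,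
the success probability of `Λ` in any state discrimination game is at most `(1+s)` times
that of the Markovian map `Γ`. -/
theorem state_discrimination_bound {n m : Type*} [Fintype n] [DecidableEq n] [Fintype m] [DecidableEq m]
    (Λ Γ Φ : Matrix n n ℂ →ₗ[ℂ] Matrix n n ℂ) (s : ℝ) (hs : 0 ≤ s)
    (hΓCP : IsCompletelyPositive Γ) (hΓTP : IsTracePreserving Γ)
    (hΦCP : IsCompletelyPositive Φ) (hΦTP : IsTracePreserving Φ)
    (hdec : Λ = (((1 + s : ℝ) : ℂ)) • Γ - ((s : ℝ) : ℂ) • Φ)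
    (J : Type*) [Fintype J] (p : J → ℝ) (hp : ∀ j, 0 ≤ p j)
    (σ : J → Matrix (m × n) (m × n) ℂ) (hσ : ∀ j, IsDensityMatrix (σ j))
    (M : J → Matrix (m × n) (m × n) ℂ) (hMpos : ∀ j, (M j).PosSemidef)
    (hMsum : ∑ j, M j = 1) :
    ∑ j, p j * ((idTensor m Λ (σ j) * M j).trace).re ≤
      (1 + s) * ∑ j, p j * ((idTensor m Γ (σ j) * M j).trace).re := by
  rw [Finset.mul_sum]
  refine Finset.sum_le_sum fun j _ => ?_
  have hΛ : idTensor m Λ (σ j) =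
      ((1 + s : ℝ) : ℂ) • idTensor m Γ (σ j) - (s : ℂ) • idTensor m Φ (σ j) := by
    rw [hdec]
    rfl
  have hΦ : 0 ≤ ((idTensor m Φ (σ j) * M j).trace).re :=
    (Complex.nonneg_iff.mp
      ((hΦCP.posSemidef_idTensor (hσ j).1).trace_mul_nonneg (hMpos j))).1
  rw [hΛ, Matrix.sub_mul, Matrix.smul_mul, Matrix.smul_mul, Matrix.trace_sub, Matrix.trace_smul,
    Matrix.trace_smul, Complex.sub_re, smul_eq_mul, smul_eq_mul, Complex.re_ofReal_mul,
    Complex.re_ofReal_mul]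
  linarith [mul_nonneg (hp j) (mul_nonneg hs hΦ)]
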